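/- Let r,s,t,u be integers with ru−st=±1 and s even. Then there is a (unique) group homomorphism φ₆ : G(r,s,t,u) → ℤ/2ℤ sending the generators a ↦ 0, b ↦ 1, c ↦ 1, and its kernel is isomorphic, as an abstract group, to G(r, s/2, 2t, u). -/

import Mathlib

/-- The relators of the presentation of the fundamental group of the sapphire
Sol 3-manifold determined by the matrix `[[r, s], [t, u]]`:
`a·b·a⁻¹·b`, `c²·a^(−2r)·b^(−s)` and `c·a^(2t)·b^u·c⁻¹·a^(2t)·b^u`,
where `a, b, c` are the generators `of 0, of 1, of 2`. -/
def sapphireRels (r s t u : ℤ) : Set (FreeGroup (Fin 3)) :=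
  { FreeGroup.of 0 * FreeGroup.of 1 * (FreeGroup.of 0)⁻¹ * FreeGroup.of 1,
    FreeGroup.of 2 ^ (2 : ℤ) * FreeGroup.of 0 ^ (-(2 * r)) * FreeGroup.of 1 ^ (-s),
    FreeGroup.of 2 * FreeGroup.of 0 ^ (2 * t) * FreeGroup.of 1 ^ u * (FreeGroup.of 2)⁻¹ *
      FreeGroup.of 0 ^ (2 * t) * FreeGroup.of 1 ^ u }

/-- The fundamental group `G(r,s,t,u)` of the sapphire Sol 3-manifold. -/
abbrev SapphireGroup (r s t u : ℤ) := PresentedGroup (sapphireRels r s t u)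

/-!
Write `A, B, C` for the generators of `G(r, 2m, t, u)` with `u = 2k + 1`, and `X = A^(2t) B^u`. The
elements `A, B², C X` satisfy the relations of `H = G(r, m, 2t, u)`, which gives a homomorphism
`ψ : H → G(r, 2m, t, u)` into the kernel. Since `X ∉ ψ(H)` and `X² ∈ ψ(H)`, left multiplication on
the cosets `ψ(H) ⊔ X ψ(H)` suggests how `A, B, C` should permute two copies of `H`; these
permutations do satisfy the relations of `G(r, 2m, t, u)`. The resulting action extends the regular
action of `H`, so `ψ` is injective, and comparing it with the regular action of `G(r, 2m, t, u)`
shows that `ψ(H)` and `X ψ(H)` exhaust the group, so `ψ(H)` is the whole kernel.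
-/

/-- The relation `a b a⁻¹ = b⁻¹` defining the fundamental group of the Klein bottle. -/
def IsKleinPair {K : Type*} [Group K] (a b : K) : Prop :=
  SemiconjBy a b b⁻¹

/-- The element `a^(2t) b^u`. For a Klein pair `(a, b)` these elements form the image of the
fundamental group of the torus that doubly covers the Klein bottle. -/
def torusWord {K : Type*} [Group K] (t u : ℤ) (a b : K) : K :=
  a ^ (2 * t) * b ^ u

/-- The relations of `SapphireGroup r s t u`, imposed on elements of an arbitrary group. The two
Klein pairs come from the two twisted `I`-bundles over the Klein bottle that are glued along their
boundary tori to form the sapphire. -/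
structure IsSapphireTriple {K : Type*} [Group K] (r s t u : ℤ) (a b c : K) : Prop where
  left : IsKleinPair a b
  sq_eq : c ^ 2 = torusWord r s a b
  right : IsKleinPair c (torusWord t u a b)

theorem map_torusWord {K L : Type*} [Group K] [Group L] (f : K →* L) (t u : ℤ) (a b : K) :
    f (torusWord t u a b) = torusWord t u (f a) (f b) := by
  simp only [torusWord, map_mul, map_zpow]

theorem zpow_eq_torusWord {K : Type*} [Group K] (a b : K) (n : ℤ) :
    b ^ n = torusWord 0 n a b := by
  simp only [torusWord, mul_zero, zpow_zero, one_mul]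

theorem torusWord_sq_right {K : Type*} [Group K] (t u : ℤ) (a b : K) :
    torusWord t u a (b ^ 2) = torusWord t (2 * u) a b := by
  simp only [torusWord, zpow_mul, zpow_ofNat]

namespace IsKleinPair

variable {K : Type*} [Group K] {a b : K}

theorem iff_mul_inv_mul_eq_one : IsKleinPair a b ↔ a * b * a⁻¹ * b = 1 := by
  rw [mul_eq_one_iff_eq_inv, mul_inv_eq_iff_eq_mul]; rfl

theorem iff_mul_mul_eq : IsKleinPair a b ↔ b * a * b = a := by
  rw [IsKleinPair, SemiconjBy, eq_inv_mul_iff_mul_eq, mul_assoc]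

theorem pow_right (h : IsKleinPair a b) (n : ℕ) : IsKleinPair a (b ^ n) := by
  simpa only [IsKleinPair, inv_pow] using SemiconjBy.pow_right h n

theorem zpow_right (h : IsKleinPair a b) (n : ℤ) : IsKleinPair a (b ^ n) := by
  simpa only [IsKleinPair, inv_zpow] using SemiconjBy.zpow_right h n

theorem mul_left_self (h : IsKleinPair a b) : IsKleinPair (a * b) b :=
  SemiconjBy.mul_left h (Commute.refl b)

theorem mul_sq (h : IsKleinPair a b) : (a * b) ^ 2 = a ^ 2 := by
  rw [sq, mul_assoc, ← mul_assoc b, iff_mul_mul_eq.1 h, sq]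

theorem commute_zpow (h : IsKleinPair a b) (t u : ℤ) : Commute (a ^ (2 * t)) (b ^ u) := by
  have h_sq : Commute (a ^ 2) b := by
    simpa only [sq, inv_inv, Commute] using
      SemiconjBy.mul_left (SemiconjBy.inv_right_iff.2 h) h
  simpa only [zpow_mul, zpow_ofNat] using (h_sq.zpow_left t).zpow_right u

theorem torusWord_mul (h : IsKleinPair a b) (t u t' u' : ℤ) :
    torusWord t u a b * torusWord t' u' a b = torusWord (t + t') (u + u') a b := by
  simp only [torusWord, mul_add, zpow_add]
  exact (h.commute_zpow t' u).symm.mul_mul_mul_comm _ _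

theorem torusWord_inv (h : IsKleinPair a b) (t u : ℤ) :
    (torusWord t u a b)⁻¹ = torusWord (-t) (-u) a b := by
  rw [inv_eq_iff_mul_eq_one, h.torusWord_mul]
  simp [torusWord]

theorem mul_torusWord (h : IsKleinPair a b) (t u : ℤ) :
    a * torusWord t u a b = torusWord t (-u) a b * a := by
  have h_right : a * b ^ u = b ^ (-u) * a := by
    rw [zpow_neg]; exact h.zpow_right u
  rw [torusWord, torusWord, ← mul_assoc, (Commute.self_zpow a (2 * t)).eq, mul_assoc, h_right,
    mul_assoc]

theorem torusWord_mul_mul_zpow (h : IsKleinPair a b) (t u : ℤ) :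
    torusWord t u a b * a * (b ^ 2) ^ u = a * torusWord t u a b := by
  rw [← zpow_natCast, ← zpow_mul, zpow_eq_torusWord a, mul_assoc, h.mul_torusWord, ← mul_assoc,
    h.torusWord_mul, h.mul_torusWord]
  ring_nf

theorem torusWord_mul_torusWord_sq (h : IsKleinPair a b) (t k : ℤ) :
    torusWord t (2 * k + 1) a b * torusWord (-t) (-k) a (b ^ 2) = b := by
  rw [torusWord_sq_right, h.torusWord_mul, add_neg_cancel, show 2 * k + 1 + 2 * -k = 1 by ring,
    ← zpow_eq_torusWord, zpow_one]

theorem mul_torusWord_eq_torusWord_sq (h : IsKleinPair a b) (t k : ℤ) :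
    b * torusWord t (2 * k + 1) a b = torusWord t (k + 1) a (b ^ 2) := by
  have h_mul := h.torusWord_mul 0 1 t (2 * k + 1)
  rw [← zpow_eq_torusWord, zpow_one] at h_mul
  rw [h_mul, torusWord_sq_right]
  ring_nf

end IsKleinPair

section UniversalProperty

variable {K : Type*} [Group K] {r s t u : ℤ} {a b c : K}

theorem isSapphireTriple_iff_lift_eq_one :
    IsSapphireTriple r s t u a b c ↔
      ∀ x ∈ sapphireRels r s t u, FreeGroup.lift ![a, b, c] x = 1 := by
  have h_sq (h : IsKleinPair a b) :
      c ^ 2 * a ^ (-(2 * r)) * b ^ (-s) = 1 ↔ c ^ 2 = torusWord r s a b := by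
    rw [← mul_inv_eq_one (b := torusWord r s a b), h.torusWord_inv, torusWord, mul_neg, mul_assoc]
  have h_right : c * a ^ (2 * t) * b ^ u * c⁻¹ * a ^ (2 * t) * b ^ u = 1 ↔
      IsKleinPair c (torusWord t u a b) := by
    simp only [IsKleinPair.iff_mul_inv_mul_eq_one, torusWord, mul_assoc]
  simp only [sapphireRels, Set.mem_insert_iff, Set.mem_singleton_iff, forall_eq_or_imp, forall_eq,
    map_mul, map_inv, map_zpow, map_pow, FreeGroup.lift_apply_of, Matrix.cons_val, zpow_ofNat,
    h_right, ← IsKleinPair.iff_mul_inv_mul_eq_one]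
  exact ⟨fun h => ⟨h.left, (h_sq h.left).2 h.sq_eq, h.right⟩,
    fun ⟨hl, hs, hr⟩ => ⟨hl, (h_sq hl).1 hs, hr⟩⟩

theorem isSapphireTriple_of (r s t u : ℤ) :
    IsSapphireTriple r s t u (PresentedGroup.of 0 : SapphireGroup r s t u)
      (PresentedGroup.of 1) (PresentedGroup.of 2) := by
  rw [isSapphireTriple_iff_lift_eq_one]
  intro x hx
  have h_lift : FreeGroup.lift ![PresentedGroup.of 0, PresentedGroup.of 1, PresentedGroup.of 2] =
      PresentedGroup.mk (sapphireRels r s t u) := by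
    ext i; fin_cases i <;> simp [PresentedGroup.of]
  rw [h_lift, PresentedGroup.one_of_mem hx]

/-- The homomorphism from `SapphireGroup r s t u` given by its universal property. -/
def IsSapphireTriple.lift (h : IsSapphireTriple r s t u a b c) : SapphireGroup r s t u →* K :=
  PresentedGroup.toGroup (isSapphireTriple_iff_lift_eq_one.1 h)

@[simp]
theorem IsSapphireTriple.lift_of_zero (h : IsSapphireTriple r s t u a b c) :
    h.lift (PresentedGroup.of 0) = a :=
  PresentedGroup.toGroup.of _

@[simp]
theorem IsSapphireTriple.lift_of_one (h : IsSapphireTriple r s t u a b c) :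
    h.lift (PresentedGroup.of 1) = b :=
  PresentedGroup.toGroup.of _

@[simp]
theorem IsSapphireTriple.lift_of_two (h : IsSapphireTriple r s t u a b c) :
    h.lift (PresentedGroup.of 2) = c :=
  PresentedGroup.toGroup.of _

theorem SapphireGroup.hom_ext {f g : SapphireGroup r s t u →* K}
    (h0 : f (PresentedGroup.of 0) = g (PresentedGroup.of 0))
    (h1 : f (PresentedGroup.of 1) = g (PresentedGroup.of 1))
    (h2 : f (PresentedGroup.of 2) = g (PresentedGroup.of 2)) : f = g :=
  PresentedGroup.ext fun
    | 0 => h0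
    | 1 => h1
    | 2 => h2

theorem IsSapphireTriple.existsUnique_hom (h : IsSapphireTriple r s t u a b c) :
    ∃! φ : SapphireGroup r s t u →* K, φ (PresentedGroup.of 0) = a ∧
      φ (PresentedGroup.of 1) = b ∧ φ (PresentedGroup.of 2) = c :=
  ⟨h.lift, ⟨h.lift_of_zero, h.lift_of_one, h.lift_of_two⟩, fun _ ⟨h0, h1, h2⟩ =>
    SapphireGroup.hom_ext (h0.trans h.lift_of_zero.symm) (h1.trans h.lift_of_one.symm)
      (h2.trans h.lift_of_two.symm)⟩

end UniversalProperty

theorem semiconj_of_closure_eq_top {G X Y : Type*} [Group G] {S : Set G}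
    (hS : Subgroup.closure S = ⊤) {θ : G →* Equiv.Perm X} {θ' : G →* Equiv.Perm Y} {F : X → Y}
    (h : ∀ g ∈ S, Function.Semiconj F (θ g) (θ' g)) (g : G) :
    Function.Semiconj F (θ g) (θ' g) := by
  have hg : g ∈ Subgroup.closure S := hS ▸ Subgroup.mem_top g
  induction hg using Subgroup.closure_induction with
  | mem g hg => exact h g hg
  | one => simpa only [map_one, Equiv.Perm.coe_one] using Function.Semiconj.id_right
  | mul x y _ _ hx hy => simpa only [map_mul, Equiv.Perm.coe_mul] using hx.comp_right hy
  | inv x _ hx =>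
    rw [map_inv, map_inv]
    exact hx.inverses_right (θ x).apply_symm_apply (θ' x).symm_apply_apply

theorem SapphireGroup.semiconj_of_generators {r s t u : ℤ} {X Y : Type*}
    {θ : SapphireGroup r s t u →* Equiv.Perm X} {θ' : SapphireGroup r s t u →* Equiv.Perm Y}
    {F : X → Y}
    (h0 : Function.Semiconj F (θ (PresentedGroup.of 0)) (θ' (PresentedGroup.of 0)))
    (h1 : Function.Semiconj F (θ (PresentedGroup.of 1)) (θ' (PresentedGroup.of 1)))
    (h2 : Function.Semiconj F (θ (PresentedGroup.of 2)) (θ' (PresentedGroup.of 2)))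
    (g : SapphireGroup r s t u) : Function.Semiconj F (θ g) (θ' g) := by
  refine semiconj_of_closure_eq_top (PresentedGroup.closure_range_of _) ?_ g
  rintro _ ⟨i, rfl⟩
  match i with
  | 0 => exact h0
  | 1 => exact h1
  | 2 => exact h2

section InducedAction

variable {H : Type*} [Group H]

/-- Left multiplication by `p.1` and `p.2` on the two copies of `H`. -/
def diagPerm : H × H →* Equiv.Perm (H ⊕ H) :=
  (Equiv.Perm.sumCongrHom H H).comp
    ((MulAction.toPermHom H H).prodMap (MulAction.toPermHom H H))

/-- Left multiplication by `p.1` and `p.2` on the two copies of `H`, followed by their exchange. -/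
def swapPerm (p : H × H) : Equiv.Perm (H ⊕ H) :=
  (diagPerm p).trans (Equiv.sumComm H H)

@[simp]
theorem diagPerm_inl (p : H × H) (x : H) : diagPerm p (Sum.inl x) = Sum.inl (p.1 * x) := rfl

@[simp]
theorem diagPerm_inr (p : H × H) (x : H) : diagPerm p (Sum.inr x) = Sum.inr (p.2 * x) := rfl

@[simp]
theorem swapPerm_inl (p : H × H) (x : H) : swapPerm p (Sum.inl x) = Sum.inr (p.1 * x) := rfl

@[simp]
theorem swapPerm_inr (p : H × H) (x : H) : swapPerm p (Sum.inr x) = Sum.inl (p.2 * x) := rfl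

theorem diagPerm_mul_swapPerm (p q : H × H) :
    diagPerm p * swapPerm q = swapPerm (p.swap * q) := by
  ext (x | x) <;> simp [mul_assoc]

theorem swapPerm_mul_diagPerm (p q : H × H) : swapPerm p * diagPerm q = swapPerm (p * q) := by
  ext (x | x) <;> simp [mul_assoc]

theorem swapPerm_mul_swapPerm (p q : H × H) :
    swapPerm p * swapPerm q = diagPerm (p.swap * q) := by
  ext (x | x) <;> simp

/-- The action of the generator `a` of `SapphireGroup r (2 * m) t u` induced from its subgroup
`SapphireGroup r m (2 * t) u`, with coset representatives `1` and `X = torusWord t u a b`. -/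
def inducedPermA (u : ℤ) (a b : H) : Equiv.Perm (H ⊕ H) :=
  diagPerm (a, a * b ^ u)

/-- The action of the generator `b` of `SapphireGroup r (2 * m) t (2 * k + 1)` induced from its
subgroup `SapphireGroup r m (2 * t) (2 * k + 1)`, whose generator `b` is the square of the former:
if `y = torusWord t k a b` in the subgroup and `X = torusWord t (2 * k + 1) a b` in the whole group,
then `b = X y⁻¹` and `b X = y b²` in the whole group. -/
def inducedPermB (t k : ℤ) (a b : H) : Equiv.Perm (H ⊕ H) :=
  swapPerm (torusWord (-t) (-k) a b, torusWord t (k + 1) a b)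

/-- The action of the generator `c` of `SapphireGroup r (2 * m) t u` induced from its subgroup
`SapphireGroup r m (2 * t) u`, whose generator `c` is `c X = X⁻¹ c` in the whole group. -/
def inducedPermC (c : H) : Equiv.Perm (H ⊕ H) :=
  swapPerm (c, c)

namespace IsKleinPair

variable {a b : H}

theorem inducedPermA_zpow_two_mul (h : IsKleinPair a b) (u n : ℤ) :
    inducedPermA u a b ^ (2 * n) = diagPerm (a ^ (2 * n), a ^ (2 * n)) := by
  have h_sq : (a * b ^ u) ^ 2 = a ^ 2 := (h.zpow_right u).mul_sq
  rw [inducedPermA, ← map_zpow, Prod.pow_mk]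
  simp only [zpow_mul, zpow_ofNat, h_sq]

theorem inducedPermB_sq (h : IsKleinPair a b) (t k : ℤ) :
    inducedPermB t k a b ^ 2 = diagPerm (b, b) := by
  rw [sq, inducedPermB, swapPerm_mul_swapPerm, Prod.swap_prod_mk, Prod.mk_mul_mk,
    h.torusWord_mul, h.torusWord_mul, add_neg_cancel, neg_add_cancel, neg_add_cancel_left,
    show k + 1 + -k = 1 by ring, ← zpow_eq_torusWord, zpow_one]

theorem torusWord_inducedPerm_even (h : IsKleinPair a b) (t k u n j : ℤ) :
    torusWord n (2 * j) (inducedPermA u a b) (inducedPermB t k a b) =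
      diagPerm (torusWord n j a b, torusWord n j a b) := by
  rw [torusWord, h.inducedPermA_zpow_two_mul, zpow_mul _ 2 j, zpow_ofNat, h.inducedPermB_sq,
    ← map_zpow, ← map_mul, Prod.pow_mk, Prod.mk_mul_mk, torusWord]

theorem torusWord_inducedPerm (h : IsKleinPair a b) (t k u : ℤ) :
    torusWord t (2 * k + 1) (inducedPermA u a b) (inducedPermB t k a b) =
      swapPerm (1, torusWord (2 * t) (2 * k + 1) a b) := by
  have h_split : torusWord t (2 * k + 1) (inducedPermA u a b) (inducedPermB t k a b) =
      diagPerm (torusWord t k a b, torusWord t k a b) * inducedPermB t k a b := by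
    rw [← h.torusWord_inducedPerm_even t k u, torusWord, zpow_add_one, ← mul_assoc, torusWord]
  rw [h_split, inducedPermB, diagPerm_mul_swapPerm, Prod.swap_prod_mk, Prod.mk_mul_mk,
    ← h.torusWord_inv, mul_inv_cancel, h.torusWord_mul]
  ring_nf

theorem inducedPerm (h : IsKleinPair a b) (t k : ℤ) :
    IsKleinPair (inducedPermA (2 * k + 1) a b) (inducedPermB t k a b) := by
  have h_fst : torusWord t (k + 1) a b * (a * b ^ (2 * k + 1)) * torusWord (-t) (-k) a b = a := by
    rw [zpow_eq_torusWord a, h.mul_torusWord, mul_assoc, mul_assoc, h.mul_torusWord, ← mul_assoc,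
      ← mul_assoc, h.torusWord_mul, h.torusWord_mul, show t + 0 + -t = 0 by ring,
      show k + 1 + -(2 * k + 1) + - -k = 0 by ring, ← zpow_eq_torusWord, zpow_zero, one_mul]
  have h_snd : torusWord (-t) (-k) a b * a * torusWord t (k + 1) a b = a * b ^ (2 * k + 1) := by
    rw [zpow_eq_torusWord a, mul_assoc, h.mul_torusWord, h.mul_torusWord, ← mul_assoc,
      h.torusWord_mul]
    ring_nf
  rw [iff_mul_mul_eq, inducedPermA, inducedPermB, swapPerm_mul_diagPerm, swapPerm_mul_swapPerm,
    Prod.mk_mul_mk, Prod.swap_prod_mk, Prod.mk_mul_mk, h_fst, h_snd]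

end IsKleinPair

theorem IsSapphireTriple.inducedPerm {r m t k : ℤ} {a b c : H}
    (h : IsSapphireTriple r m (2 * t) (2 * k + 1) a b c) :
    IsSapphireTriple r (2 * m) t (2 * k + 1) (inducedPermA (2 * k + 1) a b)
      (inducedPermB t k a b) (inducedPermC c) where
  left := h.left.inducedPerm t k
  sq_eq := by
    rw [h.left.torusWord_inducedPerm_even, sq, inducedPermC, swapPerm_mul_swapPerm,
      Prod.swap_prod_mk, Prod.mk_mul_mk, ← sq, h.sq_eq]
  right := by
    rw [h.left.torusWord_inducedPerm, IsKleinPair.iff_mul_mul_eq, inducedPermC,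
      swapPerm_mul_swapPerm, diagPerm_mul_swapPerm]
    simp [IsKleinPair.iff_mul_mul_eq.1 h.right]

end InducedAction

theorem IsSapphireTriple.indexTwo {K : Type*} [Group K] {r m t u : ℤ} {a b c : K}
    (h : IsSapphireTriple r (2 * m) t u a b c) :
    IsSapphireTriple r m (2 * t) u a (b ^ 2) (c * torusWord t u a b) where
  left := h.left.pow_right 2
  sq_eq := by rw [h.right.mul_sq, h.sq_eq, torusWord_sq_right]
  right := by
    have h_sq : torusWord (2 * t) u a (b ^ 2) = torusWord t u a b ^ 2 := by
      rw [torusWord_sq_right, sq, h.left.torusWord_mul, two_mul, two_mul]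
    rw [h_sq]
    exact h.right.mul_left_self.pow_right 2

namespace SapphireGroup

/-- The homomorphism `a ↦ a`, `b ↦ b²`, `c ↦ c a^(2t) b^u`; for odd `u` it is an isomorphism onto
a subgroup of index two. -/
def indexTwoHom (r m t u : ℤ) : SapphireGroup r m (2 * t) u →* SapphireGroup r (2 * m) t u :=
  (isSapphireTriple_of r (2 * m) t u).indexTwo.lift

/-- The action of `SapphireGroup r (2 * m) t (2 * k + 1)` induced from the regular action of
`SapphireGroup r m (2 * t) (2 * k + 1)` along `indexTwoHom`. -/
def inducedHom (r m t k : ℤ) : SapphireGroup r (2 * m) t (2 * k + 1) →*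
    Equiv.Perm (SapphireGroup r m (2 * t) (2 * k + 1) ⊕
      SapphireGroup r m (2 * t) (2 * k + 1)) :=
  (isSapphireTriple_of r m (2 * t) (2 * k + 1)).inducedPerm.lift

/-- The map identifying the two copies of `SapphireGroup r m (2 * t) u` with the cosets of the image
of `indexTwoHom` represented by `1` and `a^(2t) b^u`. -/
def cosetMap (r m t u : ℤ) :
    SapphireGroup r m (2 * t) u ⊕ SapphireGroup r m (2 * t) u → SapphireGroup r (2 * m) t u :=
  Sum.elim (indexTwoHom r m t u)
    (fun x => torusWord t u (PresentedGroup.of 0) (PresentedGroup.of 1) * indexTwoHom r m t u x)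

theorem semiconj_inl_inducedHom (r m t k : ℤ) (g : SapphireGroup r m (2 * t) (2 * k + 1)) :
    Function.Semiconj Sum.inl (g * ·) (inducedHom r m t k (indexTwoHom r m t (2 * k + 1) g)) := by
  have h := (isSapphireTriple_of r m (2 * t) (2 * k + 1)).left
  refine semiconj_of_generators (θ := MulAction.toPermHom _ _)
    (θ' := (inducedHom r m t k).comp (indexTwoHom r m t (2 * k + 1))) ?_ ?_ ?_ g <;> intro x
  · simp [indexTwoHom, inducedHom, inducedPermA]
  · simp [indexTwoHom, inducedHom, h.inducedPermB_sq]
  · simp [indexTwoHom, inducedHom, map_torusWord, h.torusWord_inducedPerm, inducedPermC]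

theorem semiconj_cosetMap_inducedHom (r m t k : ℤ) (g : SapphireGroup r (2 * m) t (2 * k + 1)) :
    Function.Semiconj (cosetMap r m t (2 * k + 1)) (inducedHom r m t k g) (g * ·) := by
  have h := isSapphireTriple_of r (2 * m) t (2 * k + 1)
  have h_a := h.left.torusWord_mul_mul_zpow t (2 * k + 1)
  have h_b := h.left.torusWord_mul_torusWord_sq t k
  have h_b' := h.left.mul_torusWord_eq_torusWord_sq t k
  have h_c := IsKleinPair.iff_mul_mul_eq.1 h.right
  refine semiconj_of_generators (θ' := MulAction.toPermHom _ _) ?_ ?_ ?_ g <;> rintro (x | x)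
  · simp [cosetMap, indexTwoHom, inducedHom, inducedPermA]
  · simp [cosetMap, indexTwoHom, inducedHom, inducedPermA, ← mul_assoc, h_a]
  · simp [cosetMap, indexTwoHom, inducedHom, inducedPermB, map_torusWord, ← mul_assoc, h_b]
  · simp [cosetMap, indexTwoHom, inducedHom, inducedPermB, map_torusWord, ← mul_assoc, h_b']
  · simp [cosetMap, indexTwoHom, inducedHom, inducedPermC, ← mul_assoc, h_c]
  · simp [cosetMap, indexTwoHom, inducedHom, inducedPermC, ← mul_assoc]

theorem indexTwoHom_injective (r m t k : ℤ) :
    Function.Injective (indexTwoHom r m t (2 * k + 1)) := by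
  intro x y hxy
  have h_orbit (z) : inducedHom r m t k (indexTwoHom r m t (2 * k + 1) z) (Sum.inl 1) =
      Sum.inl z := by
    rw [← (semiconj_inl_inducedHom r m t k z).eq, mul_one]
  exact Sum.inl_injective (by rw [← h_orbit x, hxy, h_orbit y])

theorem cosetMap_surjective (r m t k : ℤ) :
    Function.Surjective (cosetMap r m t (2 * k + 1)) := fun g =>
  ⟨inducedHom r m t k g (Sum.inl 1), by
    rw [(semiconj_cosetMap_inducedHom r m t k g).eq, cosetMap, Sum.elim_inl, map_one, mul_one]⟩

theorem range_indexTwoHom {Q : Type*} [Group Q] {z : Q} (hz : z ≠ 1) (hz_sq : z ^ 2 = 1)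
    {r m t k : ℤ} {φ : SapphireGroup r (2 * m) t (2 * k + 1) →* Q}
    (h0 : φ (PresentedGroup.of 0) = 1) (h1 : φ (PresentedGroup.of 1) = z)
    (h2 : φ (PresentedGroup.of 2) = z) :
    (indexTwoHom r m t (2 * k + 1)).range = φ.ker := by
  have h_word : φ (torusWord t (2 * k + 1) (PresentedGroup.of 0) (PresentedGroup.of 1)) = z := by
    rw [map_torusWord, h0, h1]
    simp [torusWord, zpow_add, zpow_mul, hz_sq]
  have h_comp : φ.comp (indexTwoHom r m t (2 * k + 1)) = 1 := by
    apply hom_ext <;> simp [indexTwoHom, h0, h1, h2, h_word, hz_sq, ← sq]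
  have h_le (x) : φ (indexTwoHom r m t (2 * k + 1) x) = 1 := DFunLike.congr_fun h_comp x
  refine le_antisymm (fun _ ⟨x, hx⟩ => hx ▸ h_le x) fun g hg => ?_
  obtain ⟨x | x, rfl⟩ := cosetMap_surjective r m t k g
  · exact ⟨x, rfl⟩
  · refine absurd ?_ hz
    simpa [cosetMap, h_word, h_le] using hg

end SapphireGroup

theorem isSapphireTriple_one_of_sq_eq_one {Q : Type*} [Group Q] {z : Q} (hz : z ^ 2 = 1)
    (r t u : ℤ) {s : ℤ} (hs : Even s) : IsSapphireTriple r s t u 1 z z := by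
  have h_word (i j : ℤ) : torusWord i j 1 z = z ^ j := by
    rw [torusWord, one_zpow, one_mul]
  have h_inv : z⁻¹ = z := inv_eq_of_mul_eq_one_right (by rw [← sq, hz])
  refine ⟨?_, ?_, ?_⟩
  · rw [IsKleinPair, h_inv]
    exact SemiconjBy.one_left z
  · obtain ⟨m, rfl⟩ := hs.two_dvd
    rw [h_word, zpow_mul, zpow_ofNat, hz, one_zpow]
  · rw [h_word, IsKleinPair, ← inv_zpow, h_inv]
    exact Commute.self_zpow z u

theorem odd_of_det_eq_one_or_neg_one {r s t u : ℤ}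
    (h : r * u - s * t = 1 ∨ r * u - s * t = -1) (hs : Even s) : Odd u := by
  have h_det : Odd (r * u - s * t) := by
    rcases h with h | h <;> rw [h] <;> decide
  have h_mul : Odd (r * u) := by
    simpa only [sub_add_cancel] using h_det.add_even (hs.mul_right t)
  exact (Int.odd_mul.1 h_mul).2

theorem stmt6_general (r s t u : ℤ) (hs : Even s) (hu : Odd u) :
    (∃! φ : SapphireGroup r s t u →* Multiplicative (ZMod 2),
      φ (PresentedGroup.of 0) = Multiplicative.ofAdd (0 : ZMod 2) ∧
      φ (PresentedGroup.of 1) = Multiplicative.ofAdd (1 : ZMod 2) ∧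
      φ (PresentedGroup.of 2) = Multiplicative.ofAdd (1 : ZMod 2)) ∧
    ∀ φ : SapphireGroup r s t u →* Multiplicative (ZMod 2),
      φ (PresentedGroup.of 0) = Multiplicative.ofAdd (0 : ZMod 2) →
      φ (PresentedGroup.of 1) = Multiplicative.ofAdd (1 : ZMod 2) →
      φ (PresentedGroup.of 2) = Multiplicative.ofAdd (1 : ZMod 2) →
      Nonempty (φ.ker ≃* SapphireGroup r (s / 2) (2 * t) u) := by
  have hz : Multiplicative.ofAdd (1 : ZMod 2) ≠ 1 := by decide
  have hz_sq : Multiplicative.ofAdd (1 : ZMod 2) ^ 2 = 1 := by decide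
  rw [ofAdd_zero]
  refine ⟨(isSapphireTriple_one_of_sq_eq_one hz_sq r t u hs).existsUnique_hom, ?_⟩
  intro φ h0 h1 h2
  obtain ⟨m, rfl⟩ := hs.two_dvd
  obtain ⟨k, rfl⟩ := hu
  rw [Int.mul_ediv_cancel_left m two_ne_zero,
    ← SapphireGroup.range_indexTwoHom hz hz_sq h0 h1 h2]
  exact ⟨(MonoidHom.ofInjective (SapphireGroup.indexTwoHom_injective r m t k)).symm⟩

theorem stmt6 (r s t u : ℤ) (h : r * u - s * t = 1 ∨ r * u - s * t = -1) (hs : Even s) :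
    (∃! φ : SapphireGroup r s t u →* Multiplicative (ZMod 2),
      φ (PresentedGroup.of 0) = Multiplicative.ofAdd (0 : ZMod 2) ∧
      φ (PresentedGroup.of 1) = Multiplicative.ofAdd (1 : ZMod 2) ∧
      φ (PresentedGroup.of 2) = Multiplicative.ofAdd (1 : ZMod 2)) ∧
    ∀ φ : SapphireGroup r s t u →* Multiplicative (ZMod 2),
      φ (PresentedGroup.of 0) = Multiplicative.ofAdd (0 : ZMod 2) →
      φ (PresentedGroup.of 1) = Multiplicative.ofAdd (1 : ZMod 2) →
      φ (PresentedGroup.of 2) = Multiplicative.ofAdd (1 : ZMod 2) →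
      Nonempty (φ.ker ≃* SapphireGroup r (s / 2) (2 * t) u) :=
  stmt6_general r s t u hs (odd_of_det_eq_one_or_neg_one h hs)
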